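/- Let 0=t₀<t₁<⋯<t_N be time levels with positive steps τ_k = t_k − t_{k−1}, maximum step τ = max_{1≤k≤N} τ_k, and step ratios r_k = τ_k/τ_{k−1} (2≤k≤N). Let f : ℝ×ℝ → ℝ satisfy |f(t,u) − f(t,w)| ≤ L_f|u − w| for all t,u,w with a constant L_f > 0. Let {v^n}, {v̄^n} be real sequences, set ṽ^n = v̄^n − v^n, and suppose the variable-step BDF2 perturbation equation D₂ṽ^i = f(t_i, v̄^i) − f(t_i, v^i) + ε^i holds for 2 ≤ i ≤ N. If τ ≤ 1/(4L_f), then for every 2 ≤ n ≤ N, |ṽ^n| ≤ 2·exp(4L_f·t_{n−1})·(|ṽ^1| + 2τ|∂_τṽ^1| + 2t_n·max_{2≤i≤n}|ε^i|). In particular the variable-step BDF2 scheme is stable on arbitrary time meshes (no restriction on the step ratios r_k). -/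

import Mathlib

/-- BDF coefficient function `d₀(x,y)`. -/
noncomputable def d0 (x y : ℝ) : ℝ := (1 + 2*x)/(1 + x) + x*y/(1 + y + x*y)

/-- BDF coefficient function `d₁(x,y)`. -/
noncomputable def d1 (x y : ℝ) : ℝ :=
  -(x/(1 + x)) - x*y/(1 + y + x*y) - (x*y^2/(1 + y + x*y)) * ((1 + x)/(1 + y))

/-!
Whatever the step ratio `r ≥ 0`, the BDF2 formula expresses the new difference quotient as the
convex combination `∂ⁿ = θ ∂ⁿ⁻¹ + (1 - θ) D₂ⁿ` with `θ = r / (1 + 2r) ≤ 1/2`. Hence the part of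
`|∂ⁿ|` in excess of a bound on `|D₂|` is halved at every step, and its contribution to the solution
is summable uniformly in the mesh. With `Mⁿ` the running maximum of the solution and `L` the
Lipschitz constant, what remains is the implicit inequality
`Mⁿ ≤ Mⁿ⁻¹ + τₙ (2¹⁻ⁿ |∂¹| + L Mⁿ + max |ε|)`, to which a discrete Grönwall argument applies.
-/

open Finset Real

section Gronwall

lemma le_one_add_two_mul_mul_of_le_add_mul {x y a : ℝ} (hx₀ : 0 ≤ x) (hx : x ≤ 1 / 2)
    (hy : 0 ≤ y) (h : a ≤ y + x * a) : a ≤ (1 + 2 * x) * y := by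
  have hinv : 1 ≤ (1 - x) * (1 + 2 * x) := by nlinarith
  refine le_of_mul_le_mul_left ?_ (show 0 < 1 - x by linarith)
  calc (1 - x) * a ≤ 1 * y := by linarith
    _ ≤ (1 - x) * (1 + 2 * x) * y := by gcongr
    _ = (1 - x) * ((1 + 2 * x) * y) := mul_assoc ..

lemma discrete_gronwall_of_lt {u b c : ℕ → ℝ} {n : ℕ} (hu₀ : 0 ≤ u 0)
    (hu : ∀ k < n, u (k + 1) ≤ (1 + c k) * u k + b k) (hc : ∀ k < n, 0 ≤ c k)
    (hb : ∀ k < n, 0 ≤ b k) :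
    u n ≤ (u 0 + ∑ k ∈ range n, b k) * exp (∑ k ∈ range n, c k) := by
  have htrunc : ∀ k ≥ 0, u (min (k + 1) n) ≤
      (1 + if k < n then c k else 0) * u (min k n) + if k < n then b k else 0 := by
    intro k _
    rcases lt_or_ge k n with hk | hk
    · simpa [hk, hk.le, Nat.succ_le_iff.2 hk] using hu k hk
    · simp [hk.not_gt, hk, hk.trans k.le_succ]
  have h := discrete_gronwall (n₀ := 0) (u := fun k ↦ u (min k n))
    (b := fun k ↦ if k < n then b k else 0) (c := fun k ↦ if k < n then c k else 0)
    (by simpa using hu₀) htrunc (by grind) (by grind) n.zero_le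
  simpa +contextual [← range_eq_Ico, sum_ite_of_true] using h

-- Adding `b k` to `a k` turns the implicit recursion into an explicit one, and leaves the factor
-- for the last, implicit step to be estimated by `2`.
lemma implicit_discrete_gronwall {a b x : ℕ → ℝ} {n : ℕ} (ha : ∀ k ≤ n, 0 ≤ a k)
    (hb : ∀ k ≤ n, 0 ≤ b k) (hx₀ : ∀ k ≤ n, 0 ≤ x k) (hx : ∀ k ≤ n, x k ≤ 1 / 2)
    (h : ∀ k ≤ n, a (k + 1) ≤ a k + b k + x k * a (k + 1)) :
    a (n + 1) ≤ 2 * exp (2 * ∑ k ∈ range n, x k) * (a 0 + ∑ k ∈ range (n + 1), b k) := by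
  have hab : ∀ k ≤ n, 0 ≤ a k + b k := fun k hk ↦ add_nonneg (ha k hk) (hb k hk)
  have hsucc : ∀ k ≤ n, a (k + 1) ≤ (1 + 2 * x k) * (a k + b k) := fun k hk ↦
    le_one_add_two_mul_mul_of_le_add_mul (hx₀ k hk) (hx k hk) (hab k hk) (h k hk)
  have hexplicit : a n + b n ≤
      (a 0 + b 0 + ∑ k ∈ range n, b (k + 1)) * exp (∑ k ∈ range n, 2 * x k) :=
    discrete_gronwall_of_lt (u := fun k ↦ a k + b k) (hab 0 n.zero_le)
      (fun k hk ↦ by gcongr; exact hsucc k hk.le)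
      (fun k hk ↦ mul_nonneg zero_le_two (hx₀ k hk.le)) (fun k hk ↦ hb (k + 1) hk)
  calc a (n + 1) ≤ (1 + 2 * x n) * (a n + b n) := hsucc n le_rfl
    _ ≤ 2 * (a n + b n) := by
        gcongr
        · exact hab n le_rfl
        · linarith [hx n le_rfl]
    _ ≤ 2 * ((a 0 + b 0 + ∑ k ∈ range n, b (k + 1)) * exp (∑ k ∈ range n, 2 * x k)) := by
        gcongr
    _ = 2 * exp (2 * ∑ k ∈ range n, x k) * (a 0 + ∑ k ∈ range (n + 1), b k) := by
        rw [sum_range_succ' b, mul_sum]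
        ring

lemma sum_mul_half_pow_add_le {h : ℕ → ℝ} {n : ℕ} {T c : ℝ} (δ : ℝ) (hT : 0 ≤ T) (hc : 0 ≤ c)
    (h_le : ∀ k < n, h k ≤ T) :
    ∑ k ∈ range n, h k * (c * (1 / 2) ^ (k + 1) + δ) ≤ T * c + (∑ k ∈ range n, h k) * δ := by
  calc ∑ k ∈ range n, h k * (c * (1 / 2) ^ (k + 1) + δ)
      = ∑ k ∈ range n, h k * (c / 2 * (1 / 2) ^ k) + (∑ k ∈ range n, h k) * δ := by
        rw [sum_mul, ← sum_add_distrib]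
        exact sum_congr rfl fun k _ ↦ by ring
    _ ≤ ∑ k ∈ range n, T * (c / 2 * (1 / 2) ^ k) + (∑ k ∈ range n, h k) * δ := by
        gcongr with k hk
        exact h_le k (mem_range.mp hk)
    _ = T * (c / 2 * ∑ k ∈ range n, (1 / 2) ^ k) + (∑ k ∈ range n, h k) * δ := by
        simp only [mul_sum]
    _ ≤ T * (c / 2 * 2) + (∑ k ∈ range n, h k) * δ := by
        gcongr
        exact sum_geometric_two_le n
    _ = T * c + (∑ k ∈ range n, h k) * δ := by ring

end Gronwall

section Stability

variable {V : Type*} [NormedAddCommGroup V] [NormedSpace ℝ V]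

/-- The difference quotient `∂_τ w^{k+1}` of `w` on the mesh `t`; the index is shifted so that no
truncated subtraction occurs. -/
noncomputable def diffQuotient (t : ℕ → ℝ) (w : ℕ → V) (k : ℕ) : V :=
  (t (k + 1) - t k)⁻¹ • (w (k + 1) - w k)

/-- The ratio `r_{k+2}` of consecutive steps of the mesh `t`, shifted so that the first one has
index `0`. -/
noncomputable def stepRatio (t : ℕ → ℝ) (k : ℕ) : ℝ :=
  (t (k + 2) - t (k + 1)) / (t (k + 1) - t k)

/-- The variable-step BDF2 formula `D₂ w^{k+2}` on the mesh `t`, indexed like `stepRatio`. -/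
noncomputable def bdf2Diff (t : ℕ → ℝ) (w : ℕ → V) (k : ℕ) : V :=
  d0 (stepRatio t k) 0 • diffQuotient t w (k + 1) + d1 (stepRatio t k) 0 • diffQuotient t w k

lemma bdf2Diff_eq_smul {t τ r : ℕ → ℝ} {w : ℕ → V} {k : ℕ} (hτ₁ : τ (k + 1) = t (k + 1) - t k)
    (hτ₂ : τ (k + 2) = t (k + 2) - t (k + 1)) (hr : r (k + 2) = τ (k + 2) / τ (k + 1)) :
    bdf2Diff t w k = d0 (r (k + 2)) 0 • (τ (k + 2))⁻¹ • (w (k + 2) - w (k + 1)) +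
      d1 (r (k + 2)) 0 • (τ (k + 1))⁻¹ • (w (k + 1) - w k) := by
  rw [bdf2Diff, diffQuotient, diffQuotient, stepRatio, hr, hτ₁, hτ₂]

lemma norm_le_half_add_of_norm_bdf2_le {r c B : ℝ} {g g' : V} (hr : 0 ≤ r) (hc : 0 ≤ c)
    (hg' : ‖g'‖ ≤ c + B) (hD : ‖d0 r 0 • g + d1 r 0 • g'‖ ≤ B) : ‖g‖ ≤ c / 2 + B := by
  set D := d0 r 0 • g + d1 r 0 • g' with hD_def
  have hconvex : (1 + 2 * r) • g = r • g' + (1 + r) • D := by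
    have h0 : (1 + r) * d0 r 0 = 1 + 2 * r := by
      rw [d0]
      field_simp
      ring
    have h1 : (1 + r) * d1 r 0 = -r := by
      rw [d1]
      field_simp
      ring
    rw [hD_def, smul_add, smul_smul, smul_smul, h0, h1]
    module
  refine le_of_mul_le_mul_left ?_ (show 0 < 1 + 2 * r by linarith)
  calc (1 + 2 * r) * ‖g‖ = ‖r • g' + (1 + r) • D‖ := by
        rw [← hconvex, norm_smul_of_nonneg (by linarith)]
    _ ≤ r * ‖g'‖ + (1 + r) * ‖D‖ := by
        refine (norm_add_le _ _).trans_eq ?_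
        rw [norm_smul_of_nonneg hr, norm_smul_of_nonneg (by linarith)]
    _ ≤ r * (c + B) + (1 + r) * B := by gcongr
    _ ≤ (1 + 2 * r) * (c / 2 + B) := by linarith

lemma norm_diffQuotient_succ_le {t : ℕ → ℝ} {w : ℕ → V} {B : ℕ → ℝ} {n : ℕ}
    (ht : MonotoneOn t (Set.Iic (n + 2))) (hB : MonotoneOn B (Set.Iic n))
    (hD : ∀ k ≤ n, ‖bdf2Diff t w k‖ ≤ B k) {k : ℕ} (hk : k ≤ n) :
    ‖diffQuotient t w (k + 1)‖ ≤ ‖diffQuotient t w 0‖ * (1 / 2) ^ (k + 1) + B k := by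
  have hr : ∀ k ≤ n, 0 ≤ stepRatio t k := fun k hk ↦
    div_nonneg (sub_nonneg.2 (ht (by grind) (by grind) (by lia)))
      (sub_nonneg.2 (ht (by grind) (by grind) (by lia)))
  have halve : ∀ k ≤ n, ‖diffQuotient t w k‖ ≤ ‖diffQuotient t w 0‖ * (1 / 2) ^ k + B k →
      ‖diffQuotient t w (k + 1)‖ ≤ ‖diffQuotient t w 0‖ * (1 / 2) ^ (k + 1) + B k :=
    fun k hk h ↦ (norm_le_half_add_of_norm_bdf2_le (hr k hk) (by positivity) h
      (hD k hk)).trans_eq (by ring)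
  induction k with
  | zero => exact halve 0 hk (by simpa using (norm_nonneg _).trans (hD 0 hk))
  | succ k ih =>
    refine halve (k + 1) hk ((ih (by lia)).trans ?_)
    gcongr
    exact hB (by grind) (by grind) k.le_succ

lemma partialSups_norm_succ_le {t : ℕ → ℝ} {w : ℕ → V} {k : ℕ} (ht : t (k + 1) < t (k + 2)) :
    partialSups (fun j ↦ ‖w (j + 1)‖) (k + 1) ≤ partialSups (fun j ↦ ‖w (j + 1)‖) k +
      (t (k + 2) - t (k + 1)) * ‖diffQuotient t w (k + 1)‖ := by
  have hτ : 0 < t (k + 2) - t (k + 1) := sub_pos.2 ht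
  rw [partialSups_add_one]
  refine sup_le (le_add_of_nonneg_right (by positivity)) ?_
  calc ‖w (k + 2)‖ = ‖w (k + 1) + (t (k + 2) - t (k + 1)) • diffQuotient t w (k + 1)‖ := by
        rw [diffQuotient, smul_inv_smul₀ hτ.ne', add_sub_cancel]
    _ ≤ ‖w (k + 1)‖ + (t (k + 2) - t (k + 1)) * ‖diffQuotient t w (k + 1)‖ := by
        rw [← norm_smul_of_nonneg hτ.le]
        exact norm_add_le _ _
    _ ≤ _ := by
        gcongr
        exact le_partialSups (fun j ↦ ‖w (j + 1)‖) k

lemma norm_le_of_norm_bdf2Diff_le {n : ℕ} {t : ℕ → ℝ} {w : ℕ → V} {T L δ : ℝ}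
    (ht : StrictMonoOn t (Set.Iic (n + 2))) (hT : ∀ k ≤ n, t (k + 2) - t (k + 1) ≤ T)
    (hL : 0 ≤ L) (hLT : L * T ≤ 1 / 2) (hδ : 0 ≤ δ)
    (hD : ∀ k ≤ n, ‖bdf2Diff t w k‖ ≤ L * ‖w (k + 2)‖ + δ) :
    ‖w (n + 2)‖ ≤ 2 * exp (2 * L * (t (n + 1) - t 1)) *
      (‖w 1‖ + T * ‖diffQuotient t w 0‖ + (t (n + 2) - t 1) * δ) := by
  let M : ℕ → ℝ := partialSups fun j ↦ ‖w (j + 1)‖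
  let τ : ℕ → ℝ := fun k ↦ t (k + 2) - t (k + 1)
  have hτ : ∀ k ≤ n, t (k + 1) < t (k + 2) := fun k hk ↦ ht (by grind) (by grind) (by lia)
  have hτ₀ : ∀ k ≤ n, 0 ≤ τ k := fun k hk ↦ (sub_pos.2 (hτ k hk)).le
  have hT₀ : 0 ≤ T := (hτ₀ 0 n.zero_le).trans (hT 0 n.zero_le)
  have hquot : ∀ k ≤ n, ‖diffQuotient t w (k + 1)‖ ≤
      ‖diffQuotient t w 0‖ * (1 / 2) ^ (k + 1) + (L * M (k + 1) + δ) := by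
    refine fun k ↦ norm_diffQuotient_succ_le (B := fun k ↦ L * M (k + 1) + δ) ht.monotoneOn
      (fun i _ j _ hij ↦ ?_) fun k hk ↦ (hD k hk).trans ?_
    · have : M (i + 1) ≤ M (j + 1) := partialSups_monotone _ (by lia)
      dsimp only
      gcongr
    · gcongr
      exact le_partialSups (fun j ↦ ‖w (j + 1)‖) (k + 1)
  have hstep : ∀ k ≤ n, M (k + 1) ≤
      M k + τ k * (‖diffQuotient t w 0‖ * (1 / 2) ^ (k + 1) + δ) + L * τ k * M (k + 1) := by
    intro k hk
    calc M (k + 1) ≤ M k + τ k * ‖diffQuotient t w (k + 1)‖ := partialSups_norm_succ_le (hτ k hk)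
      _ ≤ M k + τ k * (‖diffQuotient t w 0‖ * (1 / 2) ^ (k + 1) + (L * M (k + 1) + δ)) := by
          gcongr
          · exact hτ₀ k hk
          · exact hquot k hk
      _ = _ := by ring
  have hsum : ∀ m, ∑ k ∈ range m, τ k = t (m + 1) - t 1 := sum_range_sub fun k ↦ t (k + 1)
  have hbound : M (n + 1) ≤ _ := implicit_discrete_gronwall
    (fun k _ ↦ (norm_nonneg _).trans (le_partialSups (fun j ↦ ‖w (j + 1)‖) k))
    (fun k hk ↦ mul_nonneg (hτ₀ k hk) (by positivity)) (fun k hk ↦ mul_nonneg hL (hτ₀ k hk))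
    (fun k hk ↦ (mul_le_mul_of_nonneg_left (hT k hk) hL).trans hLT) hstep
  calc ‖w (n + 2)‖ ≤ M (n + 1) := le_partialSups (fun j ↦ ‖w (j + 1)‖) (n + 1)
    _ ≤ 2 * exp (2 * L * (t (n + 1) - t 1)) * (‖w 1‖ +
          ∑ k ∈ range (n + 1), τ k * (‖diffQuotient t w 0‖ * (1 / 2) ^ (k + 1) + δ)) := by
        simpa [M, ← mul_sum, hsum, mul_assoc] using hbound
    _ ≤ 2 * exp (2 * L * (t (n + 1) - t 1)) *
          (‖w 1‖ + T * ‖diffQuotient t w 0‖ + (t (n + 2) - t 1) * δ) := by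
        rw [add_assoc, ← hsum (n + 1)]
        gcongr
        exact sum_mul_half_pow_add_le δ hT₀ (norm_nonneg _) fun k hk ↦ hT k (by lia)

theorem bdf2_stability_general {N n : ℕ} {t τ r : ℕ → ℝ} {T L δ : ℝ} {f : ℝ → V → V}
    {v vbar ε vt : ℕ → V} (ht0 : t 0 = 0) (htmono : ∀ k, 1 ≤ k → k ≤ N → t (k - 1) < t k)
    (hτ : ∀ k, 1 ≤ k → k ≤ N → τ k = t k - t (k - 1)) (hT : ∀ k, 1 ≤ k → k ≤ N → τ k ≤ T)
    (hr : ∀ k, 2 ≤ k → k ≤ N → r k = τ k / τ (k - 1)) (hL : 0 ≤ L) (hLT : L * T ≤ 1 / 2)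
    (hLip : ∀ s u w, ‖f s u - f s w‖ ≤ L * ‖u - w‖) (hvt : ∀ n, vt n = vbar n - v n)
    (hBDF2 : ∀ i, 2 ≤ i → i ≤ N →
      d0 (r i) 0 • (τ i)⁻¹ • (vt i - vt (i - 1)) +
        d1 (r i) 0 • (τ (i - 1))⁻¹ • (vt (i - 1) - vt (i - 2)) =
      f (t i) (vbar i) - f (t i) (v i) + ε i)
    (hn : 2 ≤ n) (hnN : n ≤ N) (hε : ∀ i, 2 ≤ i → i ≤ n → ‖ε i‖ ≤ δ) :
    ‖vt n‖ ≤ 2 * exp (4 * L * t (n - 1)) *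
      (‖vt 1‖ + 2 * T * ‖(τ 1)⁻¹ • (vt 1 - vt 0)‖ + 2 * t n * δ) := by
  obtain ⟨m, rfl⟩ := Nat.exists_eq_add_of_le' hn
  have ht : StrictMonoOn t (Set.Iic (m + 2)) :=
    strictMonoOn_Iic_of_lt_succ fun k hk ↦ htmono (k + 1) (by lia) (by lia)
  have hstep : ∀ k ≤ m + 1, τ (k + 1) = t (k + 1) - t k := fun k hk ↦
    hτ (k + 1) (by lia) (by lia)
  have hD : ∀ k ≤ m, ‖bdf2Diff t vt k‖ ≤ L * ‖vt (k + 2)‖ + δ := by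
    intro k hk
    have heq := bdf2Diff_eq_smul (w := vt) (hstep k (by lia)) (hstep (k + 1) (by lia))
      (hr (k + 2) (by lia) (by lia))
    rw [heq.trans (hBDF2 (k + 2) (by lia) (by lia)), hvt]
    exact norm_add_le_of_le (hLip _ _ _) (hε (k + 2) (by lia) (by lia))
  have hT' : ∀ k ≤ m, t (k + 2) - t (k + 1) ≤ T := fun k hk ↦
    (hstep (k + 1) (by lia)).symm.trans_le (hT (k + 2) (by lia) (by lia))
  have hδ : 0 ≤ δ := (norm_nonneg _).trans (hε 2 le_rfl (by lia))
  have ht₁ : 0 < t 1 := ht0.symm.trans_lt (ht (by grind) (by grind) one_pos)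
  have ht_le : t 1 ≤ t (m + 1) := ht.monotoneOn (by grind) (by grind) (by lia)
  have ht_lt : ∀ k ≤ m, t (k + 1) < t (k + 2) := fun k hk ↦ ht (by grind) (by grind) (by lia)
  have hT₀ : 0 ≤ T := (sub_pos.2 (ht_lt 0 m.zero_le)).le.trans (hT' 0 m.zero_le)
  have ht_sub : 0 ≤ t (m + 2) - t 1 := by linarith [ht_lt m le_rfl]
  calc ‖vt (m + 2)‖ ≤ 2 * exp (2 * L * (t (m + 1) - t 1)) *
          (‖vt 1‖ + T * ‖diffQuotient t vt 0‖ + (t (m + 2) - t 1) * δ) :=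
        norm_le_of_norm_bdf2Diff_le ht hT' hL hLT hδ hD
    _ ≤ 2 * exp (4 * L * t (m + 1)) *
          (‖vt 1‖ + 2 * T * ‖diffQuotient t vt 0‖ + 2 * t (m + 2) * δ) := by
        gcongr <;> linarith
    _ = _ := by rw [diffQuotient, ← hstep 0 (by lia)]; rfl

end Stability

/-- Unconditional stability of the variable-step BDF2 method (Theorem 2.1):
if `τ ≤ 1/(4 L_f)` then for `2 ≤ n ≤ N`,
`|ṽⁿ| ≤ 2 exp(4 L_f t_{n-1}) (|ṽ¹| + 2τ|∂_τ ṽ¹| + 2 t_n max_{2≤i≤n} |εⁱ|)`,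
with no restriction on the step ratios. -/
theorem bdf2_stability
    (N : ℕ) (hN : 2 ≤ N)
    (t : ℕ → ℝ) (ht0 : t 0 = 0)
    (htmono : ∀ k, 1 ≤ k → k ≤ N → t (k - 1) < t k)
    (τ : ℕ → ℝ) (hτ : ∀ k, 1 ≤ k → k ≤ N → τ k = t k - t (k - 1))
    (τmax : ℝ)
    (hτmax : τmax = (Finset.Icc 1 N).sup' (Finset.nonempty_Icc.mpr (by omega)) τ)
    (r : ℕ → ℝ) (hr : ∀ k, 2 ≤ k → k ≤ N → r k = τ k / τ (k - 1))
    (Lf : ℝ) (hLf : 0 < Lf)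
    (f : ℝ → ℝ → ℝ)
    (hLip : ∀ s u w : ℝ, |f s u - f s w| ≤ Lf * |u - w|)
    (v vbar ε vt : ℕ → ℝ)
    (hvt : ∀ n, vt n = vbar n - v n)
    (hBDF2 : ∀ i, 2 ≤ i → i ≤ N →
      d0 (r i) 0 * ((vt i - vt (i - 1)) / τ i)
        + d1 (r i) 0 * ((vt (i - 1) - vt (i - 2)) / τ (i - 1))
        = f (t i) (vbar i) - f (t i) (v i) + ε i)
    (hτsmall : τmax ≤ 1/(4*Lf)) :
    ∀ n, ∀ hn : 2 ≤ n, n ≤ N →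
      |vt n| ≤ 2 * Real.exp (4*Lf*t (n - 1)) *
        (|vt 1| + 2*τmax*|(vt 1 - vt 0)/τ 1|
          + 2*t n * (Finset.Icc 2 n).sup' (Finset.nonempty_Icc.mpr hn) (fun i => |ε i|)) := by
  intro n hn hnN
  have hLτ : Lf * τmax ≤ 1 / 2 := by linarith [(le_div_iff₀ (by positivity)).1 hτsmall]
  simpa only [norm_eq_abs, smul_eq_mul, inv_mul_eq_div] using
    bdf2_stability_general ht0 htmono hτ
      (fun k hk hkN ↦ hτmax ▸ le_sup' τ (mem_Icc.2 ⟨hk, hkN⟩)) hr hLf.le hLτ hLip hvt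
      (by simpa only [smul_eq_mul, inv_mul_eq_div] using hBDF2) hn hnN
      fun i hi hin ↦ le_sup' (|ε ·|) (mem_Icc.2 ⟨hi, hin⟩)
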